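/- Let q be a prime power, d an even positive integer, and k, n1, n2 integers with k ≥ d, n1 ≥ k, and n2 ≥ k. Then A_q(n1 + n2, d, k) ≥ q^{n1·(k − d/2 + 1)} · A_q(n2, d, k) + A_q(n1, d, k) · (1 + Σ_{r=d/2}^{k−d/2} A_r), where A_r = [k choose r]_q · Σ_{i=0}^{r−d/2} (−1)^i · q^{i(i−1)/2} · [r choose i]_q · (q^{n2·(r − d/2 + 1 − i)} − 1) is the number of codewords of rank r in a linear MRD code in F_q^{k×n2} with minimum rank distance d/2. -/

import Mathlib

open Module

/-- The subspace distance `d_S(U, W) = dim(U + W) − dim(U ∩ W)`. -/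
noncomputable def subspaceDist {F : Type*} [Field F] {n : ℕ}
    (U W : Submodule F (Fin n → F)) : ℕ :=
  finrank F ↥(U ⊔ W) - finrank F ↥(U ⊓ W)

/-- `A_q(n, d, k)`: the maximum size of an `(n, M, d, k)_q` constant dimension code, i.e.
of a set of `k`-dimensional subspaces of `F_q^n` with pairwise subspace distance
at least `d`. -/
noncomputable def maxCDCSize (F : Type*) [Field F] [Fintype F] (n d k : ℕ) : ℕ :=
  sSup {M | ∃ C : Finset (Submodule F (Fin n → F)), C.card = M ∧
    (∀ U ∈ C, finrank F ↥U = k) ∧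
    ∀ U ∈ C, ∀ W ∈ C, U ≠ W → d ≤ subspaceDist U W}

/-- The Gaussian binomial coefficient
`[a choose b]_q = ∏_{j=0}^{b−1} (q^{a−j} − 1)/(q^{b−j} − 1)` for `0 ≤ b ≤ a`,
and `0` otherwise. -/
noncomputable def gaussBinom (q : ℚ) (a b : ℕ) : ℚ :=
  if b ≤ a then ∏ j ∈ Finset.range b, (q ^ (a - j) - 1) / (q ^ (b - j) - 1) else 0


lemma gaussBinom_zero_right (q : ℚ) (a : ℕ) : gaussBinom q a 0 = 1 := by
  simp [gaussBinom]

lemma gaussBinom_eq_zero (q : ℚ) {a b : ℕ} (h : a < b) : gaussBinom q a b = 0 := by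
  simp [gaussBinom, h]

lemma gaussBinom_succ_succ (q : ℚ) (a b : ℕ) :
    gaussBinom q (a + 1) (b + 1) =
      (q ^ (a + 1) - 1) / (q ^ (b + 1) - 1) * gaussBinom q a b := by
  unfold gaussBinom
  by_cases h : b ≤ a
  · simp [h, Finset.prod_range_succ', mul_comm, div_mul_div_comm]
  · simp [h]

/-- The unnormalised `q`-factorial `∏_{i=1}^{n} (q^i − 1)`. -/
def qFactorial (q : ℚ) (n : ℕ) : ℚ := ∏ i ∈ Finset.range n, (q ^ (i + 1) - 1)

lemma pow_succ_sub_one_ne_zero {q : ℚ} (hq : 1 < q) (n : ℕ) : q ^ (n + 1) - 1 ≠ 0 :=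
  (sub_pos.2 (one_lt_pow₀ hq n.succ_ne_zero)).ne'

lemma qFactorial_ne_zero {q : ℚ} (hq : 1 < q) (n : ℕ) : qFactorial q n ≠ 0 :=
  Finset.prod_ne_zero_iff.2 fun i _ => pow_succ_sub_one_ne_zero hq i

lemma qFactorial_succ (q : ℚ) (n : ℕ) :
    qFactorial q (n + 1) = qFactorial q n * (q ^ (n + 1) - 1) :=
  Finset.prod_range_succ _ _

lemma gaussBinom_add_left {q : ℚ} (hq : 1 < q) (b c : ℕ) :
    gaussBinom q (b + c) b = qFactorial q (b + c) / (qFactorial q b * qFactorial q c) := by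
  induction b with
  | zero =>
    have := qFactorial_ne_zero hq c
    simp only [gaussBinom_zero_right, zero_add]
    simp only [qFactorial, Finset.range_zero, Finset.prod_empty, one_mul] at this ⊢
    rw [div_self this]
  | succ b ih =>
    rw [show b + 1 + c = b + c + 1 by ring, gaussBinom_succ_succ, ih, qFactorial_succ,
      qFactorial_succ]
    have h1 := qFactorial_ne_zero hq b
    have h2 := qFactorial_ne_zero hq c
    have h3 := pow_succ_sub_one_ne_zero hq b
    field_simp

lemma gaussBinom_symm {q : ℚ} (hq : 1 < q) {a b : ℕ} (h : b ≤ a) :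
    gaussBinom q a (a - b) = gaussBinom q a b := by
  obtain ⟨c, rfl⟩ := Nat.exists_eq_add_of_le h
  rw [Nat.add_sub_cancel_left, gaussBinom_add_left hq, add_comm b c, gaussBinom_add_left hq,
    mul_comm]

lemma gaussBinom_self {q : ℚ} (hq : 1 < q) (a : ℕ) : gaussBinom q a a = 1 := by
  rw [← gaussBinom_symm hq le_rfl, Nat.sub_self, gaussBinom_zero_right]

lemma gaussBinom_mul_gaussBinom {q : ℚ} (hq : 1 < q) (a u i : ℕ) :
    gaussBinom q a (u + i) * gaussBinom q (u + i) u =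
      gaussBinom q a u * gaussBinom q (a - u) i := by
  by_cases h : u + i ≤ a
  · obtain ⟨c, rfl⟩ := Nat.exists_eq_add_of_le h
    rw [gaussBinom_add_left hq, gaussBinom_add_left hq,
      show u + i + c - u = i + c by omega, show u + i + c = u + (i + c) by ring,
      gaussBinom_add_left hq, gaussBinom_add_left hq]
    have h1 := qFactorial_ne_zero hq u
    have h2 := qFactorial_ne_zero hq i
    have h3 := qFactorial_ne_zero hq c
    have h4 := qFactorial_ne_zero hq (u + i)
    have h5 := qFactorial_ne_zero hq (i + c)
    field_simp
  · rw [gaussBinom_eq_zero q (not_le.1 h), zero_mul]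
    by_cases hu : u ≤ a
    · rw [gaussBinom_eq_zero q (show a - u < i by omega), mul_zero]
    · rw [gaussBinom_eq_zero q (not_le.1 hu), zero_mul]

lemma gaussBinom_pascal {q : ℚ} (hq : 1 < q) (a b : ℕ) :
    gaussBinom q (a + 1) (b + 1) = q ^ (b + 1) * gaussBinom q a (b + 1) + gaussBinom q a b := by
  rcases lt_trichotomy a b with h | rfl | h
  · rw [gaussBinom_eq_zero q h, gaussBinom_eq_zero q (by omega : a < b + 1),
      gaussBinom_eq_zero q (by omega : a + 1 < b + 1)]
    simp
  · simp [gaussBinom_self hq, gaussBinom_eq_zero q (Nat.lt_succ_self a)]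
  · obtain ⟨c, rfl⟩ := Nat.exists_eq_add_of_le (Nat.succ_le_of_lt h)
    rw [gaussBinom_succ_succ, show b.succ + c = b + (c + 1) by omega, gaussBinom_add_left hq,
      show b + (c + 1) = (b + 1) + c by ring, gaussBinom_add_left hq, qFactorial_succ q b,
      qFactorial_succ q c]
    have h1 := qFactorial_ne_zero hq b
    have h2 := qFactorial_ne_zero hq c
    have h3 := pow_succ_sub_one_ne_zero hq b
    have h4 := pow_succ_sub_one_ne_zero hq c
    field_simp
    ring

lemma sum_alternating_gaussBinom {q : ℚ} (hq : 1 < q) (m N : ℕ) :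
    ∑ i ∈ Finset.range (N + 1), (-1 : ℚ) ^ i * q ^ (i * (i - 1) / 2) * gaussBinom q (m + 1) i =
      (-1) ^ N * q ^ ((N + 1) * N / 2) * gaussBinom q m N := by
  induction N with
  | zero => simp [gaussBinom_zero_right]
  | succ N ih =>
    rw [Finset.sum_range_succ, ih, gaussBinom_pascal hq, Nat.add_sub_cancel,
      show (N + 1 + 1) * (N + 1) / 2 = (N + 1) * N / 2 + (N + 1) by
        rw [show (N + 1 + 1) * (N + 1) = (N + 1) * N + (N + 1) * 2 by ring,
          Nat.add_mul_div_right _ _ two_pos]]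
    ring

lemma sum_alternating_gaussBinom_of_le {q : ℚ} (hq : 1 < q) {m N : ℕ} (h : m ≤ N) :
    ∑ i ∈ Finset.range (N + 1), (-1 : ℚ) ^ i * q ^ (i * (i - 1) / 2) * gaussBinom q m i =
      if m = 0 then 1 else 0 := by
  rcases m with _ | m
  · rw [Finset.sum_eq_single 0]
    · simp [gaussBinom_zero_right]
    · intro i _ hi
      rw [gaussBinom_eq_zero q (Nat.pos_of_ne_zero hi), mul_zero]
    · simp
  · rw [sum_alternating_gaussBinom hq, gaussBinom_eq_zero q (by omega : m < N)]
    simp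

lemma sum_gaussBinom_inversion {q : ℚ} (hq : 1 < q) {j u N : ℕ} (h : j ≤ u + N) :
    ∑ i ∈ Finset.range (N + 1), (-1 : ℚ) ^ i * q ^ (i * (i - 1) / 2) *
      gaussBinom q (u + i) u * gaussBinom q j (u + i) = if j = u then 1 else 0 := by
  have : ∀ i, (-1 : ℚ) ^ i * q ^ (i * (i - 1) / 2) *
      gaussBinom q (u + i) u * gaussBinom q j (u + i) =
      gaussBinom q j u * ((-1 : ℚ) ^ i * q ^ (i * (i - 1) / 2) * gaussBinom q (j - u) i) := by
    intro i
    linear_combination ((-1 : ℚ) ^ i * q ^ (i * (i - 1) / 2)) * gaussBinom_mul_gaussBinom hq j u i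
  simp_rw [this]
  rw [← Finset.mul_sum, sum_alternating_gaussBinom_of_le hq (by omega)]
  rcases lt_trichotomy j u with h | rfl | h
  · rw [gaussBinom_eq_zero q h, if_neg h.ne, zero_mul]
  · simp [gaussBinom_self hq]
  · rw [if_neg (by omega), if_neg h.ne', mul_zero]

section subspaces

variable {F V : Type*} [Field F] [Fintype F] [AddCommGroup V] [Module F V] [Finite V]

lemma card_linearIndependent_eq_prod (w : ℕ) (hw : w ≤ finrank F V) :
    (Nat.card {s : Fin w → V // LinearIndependent F s} : ℚ) =
      ∏ j ∈ Finset.range w,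
        ((Fintype.card F : ℚ) ^ j * ((Fintype.card F : ℚ) ^ (finrank F V - j) - 1)) := by
  have := Fintype.ofFinite V
  rw [card_linearIndependent hw, Finset.prod_range, Nat.cast_prod]
  refine Finset.prod_congr rfl fun j _ => ?_
  have hj : (j : ℕ) ≤ finrank F V := j.2.le.trans hw
  rw [Nat.cast_sub (Nat.pow_le_pow_right Fintype.card_pos hj), mul_sub, ← pow_add,
    Nat.add_sub_cancel' hj]
  simp

/-- Linearly independent families spanning `W` are the linearly independent families in `W`
of length `dim W`. -/
def fiberSpanEquiv {w : ℕ} (W : {W : Submodule F V // finrank F W = w}) :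
    {s : {s : Fin w → V // LinearIndependent F s} // Submodule.span F (Set.range s.1) = W.1} ≃
      {t : Fin w → W.1 // LinearIndependent F t} where
  toFun s := ⟨fun i => ⟨s.1.1 i, s.2.le (Submodule.subset_span ⟨i, rfl⟩)⟩,
    LinearIndependent.of_comp W.1.subtype s.1.2⟩
  invFun t := ⟨⟨fun i => t.1 i, t.2.map' W.1.subtype W.1.ker_subtype⟩, by
    refine Submodule.eq_of_le_of_finrank_eq (Submodule.span_le.2 ?_) ?_
    · rintro _ ⟨i, rfl⟩
      exact (t.1 i).2
    · exact (finrank_span_eq_card (t.2.map' W.1.subtype W.1.ker_subtype)).trans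
        ((Fintype.card_fin w).trans W.2.symm)⟩
  left_inv s := rfl
  right_inv t := rfl

lemma card_subspaces (w : ℕ) :
    (Nat.card {W : Submodule F V // finrank F W = w} : ℚ) =
      gaussBinom (Fintype.card F) (finrank F V) w := by
  have hq : (1 : ℚ) < Fintype.card F := by exact_mod_cast Fintype.one_lt_card
  by_cases hw : w ≤ finrank F V
  · have e : (Σ W : {W : Submodule F V // finrank F W = w},
        {t : Fin w → W.1 // LinearIndependent F t}) ≃
        {s : Fin w → V // LinearIndependent F s} :=
      (Equiv.sigmaCongrRight fun W => ((Equiv.subtypeEquivRight fun s =>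
        Subtype.ext_iff).trans (fiberSpanEquiv W)).symm).trans
      (Equiv.sigmaFiberEquiv fun s => (⟨Submodule.span F (Set.range s.1), by
        rw [finrank_span_eq_card s.2, Fintype.card_fin]⟩ :
          {W : Submodule F V // finrank F W = w}))
    have := Fintype.ofFinite {W : Submodule F V // finrank F W = w}
    have hc := congrArg (Nat.cast (R := ℚ)) (Nat.card_congr e)
    rw [Nat.card_sigma, card_linearIndependent_eq_prod w hw, Nat.cast_sum,
      Finset.sum_congr rfl fun W _ => by
        rw [card_linearIndependent_eq_prod w W.2.ge, W.2],
      Finset.sum_const, nsmul_eq_mul, Finset.card_univ, ← Nat.card_eq_fintype_card] at hc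
    have hne : ∏ j ∈ Finset.range w, ((Fintype.card F : ℚ) ^ j *
        ((Fintype.card F : ℚ) ^ (w - j) - 1)) ≠ 0 := by
      refine Finset.prod_ne_zero_iff.2 fun j hj => ?_
      have := Finset.mem_range.1 hj
      refine mul_ne_zero (pow_ne_zero _ (by positivity)) ?_
      exact (sub_pos.2 (one_lt_pow₀ hq (by omega))).ne'
    rw [eq_div_of_mul_eq hne hc, ← Finset.prod_div_distrib, gaussBinom, if_pos hw]
    refine Finset.prod_congr rfl fun j _ => ?_
    rw [mul_div_mul_left]
    positivity
  · rw [gaussBinom_eq_zero _ (not_le.1 hw)]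
    have : IsEmpty {W : Submodule F V // finrank F W = w} :=
      ⟨fun W => hw (W.2 ▸ Submodule.finrank_le W.1)⟩
    simp

lemma card_subspaces_le (K : Submodule F V) (w : ℕ) :
    (Nat.card {W : {W : Submodule F V // finrank F W = w} // W.1 ≤ K} : ℚ) =
      gaussBinom (Fintype.card F) (finrank F K) w := by
  rw [← card_subspaces]
  refine congrArg Nat.cast (Nat.card_congr (Equiv.ofBijective
    (fun W => ⟨W.1.1.comap K.subtype, ?_⟩) ⟨?_, ?_⟩))
  · exact (Submodule.comapSubtypeEquivOfLe W.2).finrank_eq.trans W.1.2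
  · rintro ⟨⟨W, hW⟩, h⟩ ⟨⟨W', hW'⟩, h'⟩ he
    have he := congrArg (Submodule.map K.subtype) (congrArg Subtype.val he)
    simp only [Submodule.map_comap_subtype] at he
    simpa [inf_eq_right.2 h, inf_eq_right.2 h'] using he
  · rintro ⟨W, hW⟩
    refine ⟨⟨⟨W.map K.subtype, ?_⟩, Submodule.map_subtype_le K W⟩, ?_⟩
    · rw [← hW]
      exact (Submodule.equivSubtypeMap K W).finrank_eq.symm
    · ext
      simp

end subspaces

section gabidulin

variable {F L : Type*} [Field F] [Fintype F] [Field L] [Algebra F L]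

/-- The `F`-linear endomorphism `x ↦ ∑ i, a i * x ^ (q ^ i)` of `L` attached to a tuple `a` of
elements of `L`, as a linear function of `a`. -/
noncomputable def linearizedMap (F L : Type*) [Field F] [Fintype F] [Field L] [Algebra F L]
    (K : ℕ) : (Fin K → L) →ₗ[F] L →ₗ[F] L :=
  LinearMap.mk₂ F (fun a x => ∑ i, a i * (FiniteField.frobeniusAlgHom F L ^ (i : ℕ)) x)
    (fun a b x => by simp [add_mul, Finset.sum_add_distrib])
    (fun c a x => by simp [Finset.smul_sum])
    (fun a x y => by simp [mul_add, Finset.sum_add_distrib])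
    (fun c a x => by simp [Finset.smul_sum])

lemma linearizedMap_apply {K : ℕ} (a : Fin K → L) (x : L) :
    linearizedMap F L K a x = ∑ i, a i * x ^ (Fintype.card F ^ (i : ℕ)) := by
  simp [linearizedMap, AlgHom.coe_pow, FiniteField.coe_frobeniusAlgHom, pow_iterate]

open Polynomial in
lemma finrank_ker_linearizedMap_lt [Finite L] {K : ℕ} {a : Fin K → L} (ha : a ≠ 0) :
    finrank F (LinearMap.ker (linearizedMap F L K a)) < K := by
  classical
  have := Fintype.ofFinite L
  set q := Fintype.card F with hq
  have hq1 : 1 < q := Fintype.one_lt_card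
  obtain ⟨j, hj⟩ := Function.ne_iff.1 ha
  have hK : 0 < K := j.pos
  let P : L[X] := ∑ i : Fin K, C (a i) * X ^ (q ^ (i : ℕ))
  have hP : P ≠ 0 := by
    intro h
    apply hj
    have hc := congrArg (fun p => coeff p (q ^ (j : ℕ))) h
    simpa [P, finsetSum_coeff, coeff_C_mul, coeff_X_pow, Nat.pow_right_inj hq1,
      Fin.val_inj] using hc
  have hdeg : P.natDegree ≤ q ^ (K - 1) := by
    refine natDegree_sum_le_of_forall_le _ _ fun i _ => (natDegree_C_mul_X_pow_le _ _).trans ?_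
    exact Nat.pow_le_pow_right hq1.le (by omega)
  let Z : Finset L := Finset.univ.filter fun x => x ∈ LinearMap.ker (linearizedMap F L K a)
  have hZ : Z.card ≤ q ^ (K - 1) := by
    refine (card_le_degree_of_subset_roots fun x hx => ?_).trans hdeg
    have hx : linearizedMap F L K a x = 0 := by simpa [Z] using hx
    rw [linearizedMap_apply] at hx
    rw [mem_roots hP]
    simpa [P, IsRoot, eval_finsetSum] using hx
  have hcard : Z.card = q ^ finrank F (LinearMap.ker (linearizedMap F L K a)) := by
    rw [hq, ← Module.card_eq_pow_finrank, Fintype.card_subtype]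
  rw [hcard, Nat.pow_le_pow_iff_right hq1] at hZ
  omega

end gabidulin

lemma Submodule.exists_disjoint_finrank_eq {F V : Type*} [Field F] [AddCommGroup V] [Module F V]
    [FiniteDimensional F V] (W : Submodule F V) {m : ℕ} (hm : finrank F W + m ≤ finrank F V) :
    ∃ X : Submodule F V, finrank F X = m ∧ Disjoint W X := by
  obtain ⟨C, hC⟩ := W.exists_isCompl
  have hdim := Submodule.finrank_add_eq_of_isCompl hC
  have hmC : m ≤ finrank F C := by omega
  let b := finBasis F C
  have hli : LinearIndependent F (C.subtype ∘ fun i : Fin m => b (Fin.castLE hmC i)) :=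
    (b.linearIndependent.comp _ (Fin.castLE_injective hmC)).map' C.subtype C.ker_subtype
  refine ⟨Submodule.span F (Set.range (C.subtype ∘ fun i : Fin m => b (Fin.castLE hmC i))), ?_,
    hC.disjoint.mono_right (Submodule.span_le.2 ?_)⟩
  · rw [finrank_span_eq_card hli, Fintype.card_fin]
  · rintro _ ⟨i, rfl⟩
    exact (b _).2

/-- Existence of linear MRD codes, with the number of codewords vanishing on a given subspace. -/
lemma exists_mrd_code (F : Type*) [Field F] [Fintype F] {k n K : ℕ} (hn : 0 < n) (hkn : k ≤ n)
    (hK : K ≤ k) :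
    ∃ T : (Fin K → Fin n → F) →ₗ[F] (Fin k → F) →ₗ[F] (Fin n → F),
      ∀ W : Submodule F (Fin k → F), Nat.card {a // W ≤ LinearMap.ker (T a)} =
        Fintype.card F ^ (n * (K - finrank F W)) := by
  obtain ⟨p, hp⟩ := CharP.exists F
  have : Fact p.Prime := ⟨CharP.char_is_prime F p⟩
  have : NeZero n := ⟨hn.ne'⟩
  let L := FiniteField.Extension F p n
  have hL : finrank F L = n := FiniteField.finrank_extension F p n
  have e : L ≃ₗ[F] (Fin n → F) := LinearEquiv.ofFinrankEq _ _ (by simp [hL])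
  obtain ⟨g, hg⟩ : ∃ g : (Fin k → F) →ₗ[F] L, Function.Injective g :=
    ⟨e.symm.toLinearMap ∘ₗ Function.ExtendByZero.linearMap F (Fin.castLE hkn),
      e.symm.injective.comp (Function.extend_injective (Fin.castLE_injective hkn) 0)⟩
  let T₀ : (Fin K → L) →ₗ[F] (Fin k → F) →ₗ[F] L := (linearizedMap F L K).compl₂ g
  have hT₀ : ∀ a : Fin K → L, a ≠ 0 → finrank F (LinearMap.ker (T₀ a)) < K := by
    intro a ha
    refine lt_of_le_of_lt ?_ (finrank_ker_linearizedMap_lt (F := F) ha)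
    refine LinearMap.finrank_le_finrank_of_injective
      (f := g.restrict (p := LinearMap.ker (T₀ a)) fun x hx => hx) ?_
    intro x y hxy
    exact Subtype.ext (hg (congrArg Subtype.val hxy))
  let E : (Fin K → Fin n → F) ≃ₗ[F] (Fin K → L) := LinearEquiv.piCongrRight fun _ => e.symm
  let T : (Fin K → Fin n → F) →ₗ[F] (Fin k → F) →ₗ[F] (Fin n → F) :=
    (T₀.compr₂ e.toLinearMap) ∘ₗ E.toLinearMap
  have hT : ∀ a, LinearMap.ker (T a) = LinearMap.ker (T₀ (E a)) := by
    intro a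
    ext x
    simp [T]
  refine ⟨T, fun W => ?_⟩
  let R : ∀ X : Submodule F (Fin k → F), (Fin K → Fin n → F) →ₗ[F] X →ₗ[F] (Fin n → F) :=
    fun X => T.compl₂ X.subtype
  have hR : ∀ X a, a ∈ LinearMap.ker (R X) ↔ X ≤ LinearMap.ker (T a) := by
    intro X a
    simp [R, LinearMap.ext_iff, SetLike.le_def]
  have hlower : n * K ≤ n * finrank F W + finrank F (LinearMap.ker (R W)) := by
    have h1 := (R W).finrank_range_add_finrank_ker
    have h2 := Submodule.finrank_le (LinearMap.range (R W))
    simp only [finrank_linearMap, finrank_pi, finrank_pi_fintype, Finset.sum_const,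
      Finset.card_univ, Fintype.card_fin, smul_eq_mul] at h1 h2
    rw [mul_comm] at h2
    nlinarith
  have hupper : finrank F (LinearMap.ker (R W)) ≤ n * (K - finrank F W) := by
    have hWk : finrank F W ≤ k := by simpa using Submodule.finrank_le W
    obtain ⟨X, hX, hWX⟩ := W.exists_disjoint_finrank_eq (m := K - finrank F W)
      (by simp; omega)
    have hinj : Function.Injective ((R X).domRestrict (LinearMap.ker (R W))) := by
      rw [← LinearMap.ker_eq_bot, LinearMap.ker_eq_bot']
      rintro ⟨a, ha⟩ h
      have hXa : X ≤ LinearMap.ker (T a) := (hR X a).1 h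
      have hWa := (hR W a).1 ha
      by_contra hne
      have hEa : E a ≠ 0 := by
        intro h0
        exact hne (Subtype.ext (E.map_eq_zero_iff.1 h0))
      have h1 := hT₀ _ hEa
      rw [← hT] at h1
      have h2 := Submodule.finrank_mono (sup_le hWa hXa)
      have h3 := Submodule.finrank_sup_add_finrank_inf_eq W X
      rw [hWX.eq_bot, finrank_bot] at h3
      omega
    have h := LinearMap.finrank_le_finrank_of_injective hinj
    rw [finrank_linearMap, hX] at h
    simpa [mul_comm] using h
  have hfin : finrank F (LinearMap.ker (R W)) = n * (K - finrank F W) := by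
    refine le_antisymm hupper ?_
    rw [Nat.mul_sub]
    omega
  rw [← hfin, ← Nat.card_eq_fintype_card, ← Module.natCard_eq_pow_finrank]
  exact Nat.card_congr (Equiv.subtypeEquivRight fun a => (hR W a).symm)

section distribution

variable {F M : Type*} [Field F] [Fintype F] [Fintype M] {k n K : ℕ}
  {N : M → Submodule F (Fin k → F)}

lemma sum_gaussBinom_finrank
    (hN : ∀ W : Submodule F (Fin k → F),
      Nat.card {a // W ≤ N a} = Fintype.card F ^ (n * (K - finrank F W))) (w : ℕ) :
    ∑ a, gaussBinom (Fintype.card F) (finrank F (N a)) w =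
      gaussBinom (Fintype.card F) k w * (Fintype.card F : ℚ) ^ (n * (K - w)) := by
  let S := {W : Submodule F (Fin k → F) // finrank F W = w}
  have := Fintype.ofFinite S
  let e : (Σ a, {W : S // W.1 ≤ N a}) ≃ (Σ W : S, {a // W.1 ≤ N a}) :=
    { toFun := fun x => ⟨x.2.1, x.1, x.2.2⟩
      invFun := fun x => ⟨x.2.1, x.1, x.2.2⟩
      left_inv := fun _ => rfl
      right_inv := fun _ => rfl }
  have h := congrArg (Nat.cast (R := ℚ)) (Nat.card_congr e)
  have hS : ∀ W : S, Nat.card {a // W.1 ≤ N a} = Fintype.card F ^ (n * (K - w)) := by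
    intro W
    rw [hN, W.2]
  rw [Nat.card_sigma, Nat.card_sigma, Nat.cast_sum, Nat.cast_sum,
    Finset.sum_congr rfl fun a _ => card_subspaces_le (N a) w] at h
  simp_rw [hS] at h
  rw [h, Finset.sum_const, nsmul_eq_mul, Finset.card_univ, ← Nat.card_eq_fintype_card,
    card_subspaces]
  simp

/-- The rank distribution of linear MRD codes. -/
lemma card_finrank_eq {δ r : ℕ} (hδ : 0 < δ) (hδr : δ ≤ r) (hrk : r ≤ k)
    (hN : ∀ W : Submodule F (Fin k → F),
      Nat.card {a // W ≤ N a} = Fintype.card F ^ (n * (k - δ + 1 - finrank F W))) :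
    ((Finset.univ.filter fun a => finrank F (N a) = k - r).card : ℚ) =
      gaussBinom (Fintype.card F) k r *
        ∑ i ∈ Finset.range (r - δ + 1),
          (-1 : ℚ) ^ i * (Fintype.card F : ℚ) ^ (i * (i - 1) / 2) *
            gaussBinom (Fintype.card F) r i *
              ((Fintype.card F : ℚ) ^ (n * (r - δ + 1 - i)) - 1) := by
  have hq : (1 : ℚ) < Fintype.card F := by exact_mod_cast Fintype.one_lt_card
  set q : ℚ := (Fintype.card F : ℚ)
  calc ((Finset.univ.filter fun a => finrank F (N a) = k - r).card : ℚ)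
      = ∑ a, if finrank F (N a) = k - r then 1 else 0 := by simp
    _ = ∑ a, ∑ i ∈ Finset.range (r + 1), (-1 : ℚ) ^ i * q ^ (i * (i - 1) / 2) *
          gaussBinom q (k - r + i) (k - r) * gaussBinom q (finrank F (N a)) (k - r + i) := by
        refine Finset.sum_congr rfl fun a _ => (sum_gaussBinom_inversion hq ?_).symm
        have : finrank F (N a) ≤ k := by simpa using Submodule.finrank_le (N a)
        omega
    _ = ∑ i ∈ Finset.range (r + 1), (-1 : ℚ) ^ i * q ^ (i * (i - 1) / 2) *
          gaussBinom q (k - r + i) (k - r) *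
            (gaussBinom q k (k - r + i) * q ^ (n * (k - δ + 1 - (k - r + i)))) := by
        rw [Finset.sum_comm]
        simp_rw [← Finset.mul_sum]
        simp_rw [q, sum_gaussBinom_finrank hN]
    _ = gaussBinom q k r * ∑ i ∈ Finset.range (r + 1), (-1 : ℚ) ^ i * q ^ (i * (i - 1) / 2) *
          gaussBinom q r i * q ^ (n * (r - δ + 1 - i)) := by
        rw [Finset.mul_sum]
        refine Finset.sum_congr rfl fun i _ => ?_
        have h := gaussBinom_mul_gaussBinom hq k (k - r) i
        rw [gaussBinom_symm hq hrk, Nat.sub_sub_self hrk] at h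
        rw [show k - δ + 1 - (k - r + i) = r - δ + 1 - i by omega]
        linear_combination
          ((-1 : ℚ) ^ i * q ^ (i * (i - 1) / 2) * q ^ (n * (r - δ + 1 - i))) * h
    _ = gaussBinom q k r * ∑ i ∈ Finset.range (r + 1), (-1 : ℚ) ^ i * q ^ (i * (i - 1) / 2) *
          gaussBinom q r i * (q ^ (n * (r - δ + 1 - i)) - 1) := by
        have h := sum_alternating_gaussBinom_of_le hq (le_refl r)
        rw [if_neg (by omega)] at h
        simp_rw [mul_sub, Finset.sum_sub_distrib, mul_one]
        rw [h, sub_zero]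
    _ = _ := by
        congr 1
        refine (Finset.sum_subset (Finset.range_mono (by omega)) fun i _ hi => ?_).symm
        have : r - δ + 1 - i = 0 := by
          have := Finset.mem_range.not.1 hi
          omega
        simp [this]

lemma one_add_sum_card_finrank_le {δ : ℕ} (hδ : 0 < δ) (hδk : δ ≤ k)
    (hN : ∀ W : Submodule F (Fin k → F),
      Nat.card {a // W ≤ N a} = Fintype.card F ^ (n * (k - δ + 1 - finrank F W))) :
    (1 + ∑ r ∈ Finset.Icc δ (k - δ), gaussBinom (Fintype.card F) k r *
        ∑ i ∈ Finset.range (r - δ + 1),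
          (-1 : ℚ) ^ i * (Fintype.card F : ℚ) ^ (i * (i - 1) / 2) *
            gaussBinom (Fintype.card F) r i *
              ((Fintype.card F : ℚ) ^ (n * (r - δ + 1 - i)) - 1)) ≤
      ((Finset.univ.filter fun a => δ ≤ finrank F (N a)).card : ℚ) := by
  classical
  obtain ⟨⟨z, hz⟩⟩ : Nonempty {a // ⊤ ≤ N a} := by
    have h := hN ⊤
    have : 0 < Nat.card {a // ⊤ ≤ N a} := by
      rw [h]
      exact pow_pos Fintype.card_pos _
    exact (Nat.card_pos_iff.1 this).1
  have hz : finrank F (N z) = k := by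
    rw [top_le_iff.1 hz]
    simp
  let A : ℕ → Finset M := fun r => Finset.univ.filter fun a => finrank F (N a) = k - r
  have hA : ∑ r ∈ Finset.Icc δ (k - δ), (A r).card =
      ((Finset.Icc δ (k - δ)).biUnion A).card := by
    refine (Finset.card_biUnion fun r hr s hs hrs => ?_).symm
    refine Finset.disjoint_left.2 ?_
    intro a ha ha'
    simp only [A, Finset.mem_filter, Finset.coe_Icc, Set.mem_Icc] at ha ha' hr hs
    omega
  have hzA : z ∉ (Finset.Icc δ (k - δ)).biUnion A := by
    simp only [A, Finset.mem_biUnion, Finset.mem_filter, Finset.mem_Icc, not_exists]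
    omega
  rw [← Finset.sum_congr rfl fun r hr =>
    card_finrank_eq hδ (Finset.mem_Icc.1 hr).1 (by have := Finset.mem_Icc.1 hr; omega) hN]
  change 1 + ∑ r ∈ Finset.Icc δ (k - δ), ((A r).card : ℚ) ≤ _
  rw [← Nat.cast_sum, hA, add_comm, ← Nat.cast_one, ← Nat.cast_add,
    ← Finset.card_insert_of_notMem hzA, Nat.cast_le]
  refine Finset.card_le_card fun a ha => ?_
  simp only [A, Finset.mem_insert, Finset.mem_biUnion, Finset.mem_filter, Finset.mem_Icc,
    Finset.mem_univ, true_and] at ha ⊢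
  rcases ha with rfl | ⟨r, hr, ha⟩ <;> omega

end distribution

lemma exists_cdc_card_eq (F : Type*) [Field F] [Fintype F] (n δ k : ℕ) :
    ∃ C : Finset (Submodule F (Fin n → F)), C.card = maxCDCSize F n (2 * δ) k ∧
      (∀ U ∈ C, finrank F U = k) ∧
      ∀ U ∈ C, ∀ W ∈ C, U ≠ W → finrank F ↥(U ⊓ W) + δ ≤ k := by
  classical
  have := Fintype.ofFinite (Submodule F (Fin n → F))
  have hmem : maxCDCSize F n (2 * δ) k ∈ _ := Nat.sSup_mem
    (s := {M | ∃ C : Finset (Submodule F (Fin n → F)), C.card = M ∧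
      (∀ U ∈ C, finrank F ↥U = k) ∧
      ∀ U ∈ C, ∀ W ∈ C, U ≠ W → 2 * δ ≤ subspaceDist U W}) ⟨0, ∅, by simp⟩
    ⟨Fintype.card (Submodule F (Fin n → F)), by
      rintro _ ⟨C, rfl, -⟩
      exact Finset.card_le_univ C⟩
  obtain ⟨C, hC, hk, hd⟩ := hmem
  refine ⟨C, hC, hk, fun U hU W hW hUW => ?_⟩
  have h1 := hd U hU W hW hUW
  have h2 := Submodule.finrank_sup_add_finrank_inf_eq U W
  have h3 := Submodule.finrank_mono (inf_le_left : U ⊓ W ≤ U)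
  rw [hk U hU, hk W hW] at h2
  rw [hk U hU] at h3
  rw [subspaceDist] at h1
  omega

lemma card_le_maxCDCSize {F V ι : Type*} [Field F] [Fintype F] [AddCommGroup V] [Module F V]
    [FiniteDimensional F V] [Fintype ι] {n δ k : ℕ} (hV : finrank F V = n) (hδ : 0 < δ)
    (S : ι → Submodule F V) (hk : ∀ i, finrank F (S i) = k)
    (hS : ∀ i j, i ≠ j → finrank F ↥(S i ⊓ S j) + δ ≤ k) :
    Fintype.card ι ≤ maxCDCSize F n (2 * δ) k := by
  classical
  have := Fintype.ofFinite (Submodule F (Fin n → F))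
  have e : V ≃ₗ[F] (Fin n → F) := LinearEquiv.ofFinrankEq _ _ (by simp [hV])
  let S' : ι → Submodule F (Fin n → F) := fun i => (S i).map e.toLinearMap
  have hk' : ∀ i, finrank F (S' i) = k := fun i => (e.finrank_map_eq (S i)).trans (hk i)
  have hS' : ∀ i j, i ≠ j → finrank F ↥(S' i ⊓ S' j) + δ ≤ k := by
    intro i j hij
    rw [← Submodule.map_inf _ e.injective, LinearEquiv.finrank_map_eq e]
    exact hS i j hij
  have hinj : Function.Injective S' := by
    intro i j hij
    by_contra hne
    have := hS' i j hne
    rw [← hij, inf_idem, hk'] at this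
    omega
  refine le_csSup ⟨Fintype.card (Submodule F (Fin n → F)), ?_⟩
    ⟨Finset.univ.map ⟨S', hinj⟩, by simp, by simpa using hk', ?_⟩
  · rintro _ ⟨C, rfl, -⟩
    exact Finset.card_le_univ C
  · simp only [Finset.mem_map, Finset.mem_univ, true_and, Function.Embedding.coeFn_mk,
      forall_exists_index, forall_apply_eq_imp_iff]
    intro i j hij
    have h1 := hS' i j fun h => hij (congrArg S' h)
    have h2 := Submodule.finrank_sup_add_finrank_inf_eq (S' i) (S' j)
    rw [hk', hk'] at h2
    rw [subspaceDist]
    omega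

/-- In a code with the vanishing counts of an MRD code, a nonzero codeword has large rank. -/
lemma finrank_ker_sub_lt {F M X Y : Type*} [Field F] [Fintype F] [AddCommGroup M] [Module F M]
    [Finite M] [AddCommGroup X] [Module F X] [AddCommGroup Y] [Module F Y] {n K : ℕ}
    {T : M →ₗ[F] X →ₗ[F] Y}
    (hT : ∀ W : Submodule F X, Nat.card {a // W ≤ LinearMap.ker (T a)} =
      Fintype.card F ^ (n * (K - finrank F W))) {a b : M} (hab : a ≠ b) :
    finrank F (LinearMap.ker (T a - T b)) < K := by
  by_contra! h
  have hc := hT (LinearMap.ker (T a - T b))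
  rw [Nat.sub_eq_zero_of_le h, mul_zero, pow_zero, Nat.card_eq_one_iff_unique] at hc
  have := hc.1
  have he := Subsingleton.elim (α := {c // LinearMap.ker (T a - T b) ≤ LinearMap.ker (T c)})
    ⟨a - b, by rw [map_sub]⟩ ⟨0, by simp⟩
  exact hab (sub_eq_zero.1 (congrArg Subtype.val he))

lemma finrank_range_inf_range_le {F X Y V : Type*} [Field F] [AddCommGroup X] [Module F X]
    [AddCommGroup Y] [Module F Y] [AddCommGroup V] [Module F V] [FiniteDimensional F Y]
    (π : V →ₗ[F] Y) {p p' : X →ₗ[F] V} (hp : Function.Injective (π ∘ₗ p)) :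
    finrank F ↥(LinearMap.range p ⊓ LinearMap.range p') ≤
      finrank F ↥(LinearMap.range (π ∘ₗ p) ⊓ LinearMap.range (π ∘ₗ p')) := by
  refine LinearMap.finrank_le_finrank_of_injective (f := π.restrict ?_) ?_
  · rintro _ ⟨⟨x, rfl⟩, ⟨y, hy⟩⟩
    exact ⟨⟨x, rfl⟩, ⟨y, congrArg π hy⟩⟩
  · rintro ⟨_, ⟨x, rfl⟩, hx⟩ ⟨_, ⟨y, rfl⟩, hy⟩ h
    exact Subtype.ext (congrArg p (hp (congrArg Subtype.val h)))

lemma finrank_range_inf_range_le_ker_sub {F X Y V : Type*} [Field F] [AddCommGroup X] [Module F X]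
    [AddCommGroup Y] [Module F Y] [AddCommGroup V] [Module F V] [FiniteDimensional F X]
    (π : V →ₗ[F] Y) {p p' : X →ₗ[F] V} (hp : Function.Injective (π ∘ₗ p))
    (hpp' : π ∘ₗ p = π ∘ₗ p') :
    finrank F ↥(LinearMap.range p ⊓ LinearMap.range p') ≤
      finrank F (LinearMap.ker (p - p')) := by
  have : LinearMap.range p ⊓ LinearMap.range p' ≤ (LinearMap.ker (p - p')).map p := by
    rintro _ ⟨⟨x, rfl⟩, ⟨y, hy⟩⟩
    obtain rfl : y = x := hp ((LinearMap.congr_fun hpp' y).trans (congrArg π hy))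
    exact ⟨y, by simp [hy], rfl⟩
  exact (Submodule.finrank_mono this).trans (Submodule.finrank_map_le _ _)

lemma exists_injective_range_eq {F V : Type*} [Field F] [AddCommGroup V] [Module F V]
    [FiniteDimensional F V] {k : ℕ} (U : Submodule F V) (hU : finrank F U = k) :
    ∃ e : (Fin k → F) →ₗ[F] V, Function.Injective e ∧ LinearMap.range e = U := by
  have e : (Fin k → F) ≃ₗ[F] U := LinearEquiv.ofFinrankEq _ _ (by simp [hU])
  exact ⟨U.subtype ∘ₗ e.toLinearMap, U.subtype_injective.comp e.injective, by
    rw [LinearMap.range_comp, LinearEquiv.range, Submodule.map_top, Submodule.range_subtype]⟩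

/-- The parallel linkage construction: subspaces `(A | U)` with `A` in an MRD code and `U` in a
constant dimension code, together with subspaces `(U | B)` with `B` an MRD codeword of rank at
most `k - δ`. -/
lemma parallel_linkage {F M₁ M₂ : Type*} [Field F] [Fintype F]
    [AddCommGroup M₁] [Module F M₁] [Fintype M₁] [AddCommGroup M₂] [Module F M₂] [Fintype M₂]
    {n₁ n₂ δ k : ℕ} (hδ : 0 < δ) (hδk : δ ≤ k)
    (T₁ : M₁ →ₗ[F] (Fin k → F) →ₗ[F] (Fin n₁ → F))
    (T₂ : M₂ →ₗ[F] (Fin k → F) →ₗ[F] (Fin n₂ → F))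
    (hT₁ : ∀ a b, a ≠ b → finrank F (LinearMap.ker (T₁ a - T₁ b)) < k - δ + 1)
    (hT₂ : ∀ a b, a ≠ b → finrank F (LinearMap.ker (T₂ a - T₂ b)) < k - δ + 1) :
    Fintype.card M₁ * maxCDCSize F n₂ (2 * δ) k + maxCDCSize F n₁ (2 * δ) k *
      (Finset.univ.filter fun b => δ ≤ finrank F (LinearMap.ker (T₂ b))).card ≤
      maxCDCSize F (n₁ + n₂) (2 * δ) k := by
  classical
  obtain ⟨C₁, hC₁, hk₁, hd₁⟩ := exists_cdc_card_eq F n₁ δ k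
  obtain ⟨C₂, hC₂, hk₂, hd₂⟩ := exists_cdc_card_eq F n₂ δ k
  choose e₁ he₁ hr₁ using fun U : C₁ => exists_injective_range_eq U.1 (hk₁ U U.2)
  choose e₂ he₂ hr₂ using fun U : C₂ => exists_injective_range_eq U.1 (hk₂ U U.2)
  let B := {b // δ ≤ finrank F (LinearMap.ker (T₂ b))}
  let p : (M₁ × C₂) ⊕ (C₁ × B) → ((Fin k → F) →ₗ[F] (Fin n₁ → F) × (Fin n₂ → F)) :=
    Sum.elim (fun x => (T₁ x.1).prod (e₂ x.2)) (fun x => (e₁ x.1).prod (T₂ x.2.1))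
  have hp : ∀ i, Function.Injective (p i) := by
    rintro (⟨a, U⟩ | ⟨U, b⟩) x y h
    · exact he₂ U (congrArg Prod.snd h)
    · exact he₁ U (congrArg Prod.fst h)
  have hcross : ∀ x y, finrank F ↥(LinearMap.range (p (Sum.inl x)) ⊓
      LinearMap.range (p (Sum.inr y))) + δ ≤ k := by
    rintro ⟨a, U⟩ ⟨W, b, hb⟩
    have h1 := finrank_range_inf_range_le (LinearMap.snd F (Fin n₁ → F) (Fin n₂ → F))
      (p := p (Sum.inl (a, U))) (p' := p (Sum.inr (W, ⟨b, hb⟩))) (he₂ U)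
    have h2 := h1.trans (Submodule.finrank_mono inf_le_right)
    have h3 := (T₂ b).finrank_range_add_finrank_ker
    rw [finrank_fin_fun] at h3
    change _ ≤ finrank F (LinearMap.range (T₂ b)) at h2
    omega
  have hcard := card_le_maxCDCSize (n := n₁ + n₂) (δ := δ) (k := k) (by simp) hδ
    (fun i => LinearMap.range (p i))
    (fun i => by rw [LinearMap.finrank_range_of_inj (hp i), finrank_fin_fun]) (by
      rintro (⟨a, U⟩ | ⟨U, b⟩) (⟨a', U'⟩ | ⟨U', b'⟩) hne
      · by_cases hU : U = U'
        · subst hU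
          have ha : a ≠ a' := fun h => hne (by rw [h])
          have h1 := finrank_range_inf_range_le_ker_sub
            (LinearMap.snd F (Fin n₁ → F) (Fin n₂ → F))
            (p := p (Sum.inl (a, U))) (p' := p (Sum.inl (a', U))) (he₂ U) rfl
          have h2 : LinearMap.ker (p (Sum.inl (a, U)) - p (Sum.inl (a', U))) ≤
              LinearMap.ker (T₁ a - T₁ a') := fun x hx => congrArg Prod.fst hx
          have h3 := h1.trans (Submodule.finrank_mono h2)
          have h4 := hT₁ a a' ha
          omega
        · have h1 := finrank_range_inf_range_le (LinearMap.snd F (Fin n₁ → F) (Fin n₂ → F))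
            (p := p (Sum.inl (a, U))) (p' := p (Sum.inl (a', U'))) (he₂ U)
          change _ ≤ finrank F ↥(LinearMap.range (e₂ U) ⊓ LinearMap.range (e₂ U')) at h1
          rw [hr₂, hr₂] at h1
          have h2 := hd₂ U U.2 U' U'.2 fun h => hU (Subtype.ext h)
          omega
      · exact hcross _ _
      · rw [inf_comm]
        exact hcross _ _
      · by_cases hU : U = U'
        · subst hU
          have hb : b.1 ≠ b'.1 := fun h => hne (by rw [Subtype.ext h])
          have h1 := finrank_range_inf_range_le_ker_sub
            (LinearMap.fst F (Fin n₁ → F) (Fin n₂ → F))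
            (p := p (Sum.inr (U, b))) (p' := p (Sum.inr (U, b'))) (he₁ U) rfl
          have h2 : LinearMap.ker (p (Sum.inr (U, b)) - p (Sum.inr (U, b'))) ≤
              LinearMap.ker (T₂ b.1 - T₂ b'.1) := fun x hx => congrArg Prod.snd hx
          have h3 := h1.trans (Submodule.finrank_mono h2)
          have h4 := hT₂ b.1 b'.1 hb
          omega
        · have h1 := finrank_range_inf_range_le (LinearMap.fst F (Fin n₁ → F) (Fin n₂ → F))
            (p := p (Sum.inr (U, b))) (p' := p (Sum.inr (U', b'))) (he₁ U)
          change _ ≤ finrank F ↥(LinearMap.range (e₁ U) ⊓ LinearMap.range (e₁ U')) at h1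
          rw [hr₁, hr₁] at h1
          have h2 := hd₁ U U.2 U' U'.2 fun h => hU (Subtype.ext h)
          omega)
  rw [Fintype.card_sum, Fintype.card_prod, Fintype.card_prod, Fintype.card_coe,
    Fintype.card_coe, hC₁, hC₂, Fintype.card_subtype] at hcard
  exact hcard

/-- For `k ≥ d`, `n1 ≥ k`, `n2 ≥ k` (`d` even positive, `q` a prime power),
`A_q(n1+n2, d, k) ≥ q^{n1(k−d/2+1)}·A_q(n2, d, k) + A_q(n1, d, k)·(1 + Σ_{r=d/2}^{k−d/2} A_r)`,
where `A_r` is the Delsarte rank-`r` count of a linear MRD code in `F_q^{k×n2}` with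
minimum rank distance `d/2`. -/
theorem two_parallel_linkage_lower_bound (q d k n1 n2 : ℕ) (hq : IsPrimePow q)
    (hd : 0 < d) (hdeven : Even d) (hkd : d ≤ k) (hn1 : k ≤ n1) (hn2 : k ≤ n2)
    (F : Type*) [Field F] [Fintype F] (hcard : Fintype.card F = q) :
    ((q : ℚ) ^ (n1 * (k - d / 2 + 1)) * (maxCDCSize F n2 d k : ℚ) +
        (maxCDCSize F n1 d k : ℚ) *
          (1 + ∑ r ∈ Finset.Icc (d / 2) (k - d / 2),
            gaussBinom q k r *
              ∑ i ∈ Finset.range (r - d / 2 + 1),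
                (-1 : ℚ) ^ i * (q : ℚ) ^ (i * (i - 1) / 2) * gaussBinom q r i *
                  ((q : ℚ) ^ (n2 * (r - d / 2 + 1 - i)) - 1))) ≤
      (maxCDCSize F (n1 + n2) d k : ℚ) := by
  subst hcard
  obtain ⟨δ, rfl⟩ := hdeven
  have hδ : 0 < δ := by omega
  have hδk : δ ≤ k := by omega
  rw [show (δ + δ) / 2 = δ by omega, ← two_mul]
  obtain ⟨T₁, hT₁⟩ := exists_mrd_code F (k := k) (n := n1) (K := k - δ + 1)
    (by omega) hn1 (by omega)
  obtain ⟨T₂, hT₂⟩ := exists_mrd_code F (k := k) (n := n2) (K := k - δ + 1)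
    (by omega) hn2 (by omega)
  have := Fintype.ofFinite (Fin (k - δ + 1) → Fin n1 → F)
  have := Fintype.ofFinite (Fin (k - δ + 1) → Fin n2 → F)
  have hlink := parallel_linkage hδ hδk T₁ T₂ (fun _ _ h => finrank_ker_sub_lt hT₁ h)
    (fun _ _ h => finrank_ker_sub_lt hT₂ h)
  have hM : Fintype.card (Fin (k - δ + 1) → Fin n1 → F) =
      Fintype.card F ^ (n1 * (k - δ + 1)) := by
    rw [← Nat.card_eq_fintype_card, Module.natCard_eq_pow_finrank (K := F)]
    simp [finrank_pi_fintype, mul_comm]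
  rw [hM] at hlink
  have hrank := one_add_sum_card_finrank_le hδ hδk hT₂
  calc _ ≤ _ := add_le_add le_rfl (mul_le_mul_of_nonneg_left hrank (Nat.cast_nonneg _))
    _ ≤ _ := by exact_mod_cast hlink
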